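/- Let E be an elliptic curve with flat Kähler metric g₀, and E₀ = L_{q₁} ⊕ ⋯ ⊕ L_{q_n} with the q_i distinct, equipped with the flat diagonal Chern connection A₀ and trivial Hermitian metric H₀. Then there is a constant C_p > 0 such that for every trace-free Hermitian endomorphism s whose diagonal entries (in the trivial unitary frame) have zero average over E, one has ‖s‖_{L²(E)} ≤ C_p ‖∂̄_{A₀} s‖_{L²(E)}. -/

import Mathlib

open MeasureTheory
open scoped Matrix

/-- Partial derivative in the `y¹` direction of a complex function on `ℝ²`. -/
noncomputable def pdy1 (f : ℝ × ℝ → ℂ) (y : ℝ × ℝ) : ℂ :=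
  deriv (fun t => f (t, y.2)) y.1

/-- Partial derivative in the `y²` direction. -/
noncomputable def pdy2 (f : ℝ × ℝ → ℂ) (y : ℝ × ℝ) : ℂ :=
  deriv (fun t => f (y.1, t)) y.2

/-- The `∂/∂z̄` operator for the complex coordinate `z = τy¹ + y²` on the
elliptic curve `E = ℂ/(ℤ + τℤ)`:  `∂_z̄ = (1/(2i·Im τ))(−∂_{y¹} + τ ∂_{y²})`. -/
noncomputable def dbar (τ : ℂ) (f : ℝ × ℝ → ℂ) (y : ℝ × ℝ) : ℂ :=
  (1 / (2 * Complex.I * (τ.im : ℂ))) * (-(pdy1 f y) + τ * pdy2 f y)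

/-- The operator `∂̄_{A₀}` on endomorphisms of `E₀ = L_{q₁} ⊕ ⋯ ⊕ L_{q_n}`, where
`A₀` is the flat diagonal Chern connection with `∂̄_{A₀} = ∂̄ − (π/Im τ)[Q, ·] dz̄`
and `Q = diag(q̃₁, …, q̃_n)` the diagonal matrix of lifts. -/
noncomputable def dbarA (n : ℕ) (τ : ℂ) (Q : Fin n → ℂ)
    (s : ℝ × ℝ → Matrix (Fin n) (Fin n) ℂ) (y : ℝ × ℝ) :
    Matrix (Fin n) (Fin n) ℂ :=
  Matrix.of fun k l =>
    dbar τ (fun y => s y k l) y - ((Real.pi : ℂ) / (τ.im : ℂ)) * (Q k - Q l) * s y k l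

/-- The squared `L²(E, H₀, g₀)` norm of a matrix-valued field, integrating over
the fundamental domain `[0,1]²` of the torus. -/
noncomputable def l2sq (n : ℕ) (s : ℝ × ℝ → Matrix (Fin n) (Fin n) ℂ) : ℝ :=
  ∫ y in (Set.Icc (0:ℝ) 1 ×ˢ Set.Icc (0:ℝ) 1), ∑ k, ∑ l, Complex.normSq (s y k l)

/-!
On the `(k, l)` entry of `s`, `∂̄_{A₀}` acts as `∂_z̄ - (π / Im τ) (q̃_k - q̃_l)`, an operator
diagonalised by the characters of the torus: on the character of frequency `m` it is multiplication
by `(π / Im τ) (m₂ τ - m₁ - (q̃_k - q̃_l))`. These eigenvalues are translates of a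
rescaled lattice, so the nonzero ones are bounded away from zero. The zero eigenvalue occurs only
for `k = l` and `m = 0`, because the points `q_i` are distinct in `E`, and there the Fourier
coefficient is the average of a diagonal entry, which vanishes. Parseval's identity concludes.
-/

open Filter Topology

section LatticeGap

lemma tendsto_sum_intCast_smul_cofinite_cocompact {ι E : Type*} [Fintype ι]
    [NormedAddCommGroup E] [NormedSpace ℝ E] {b : ι → E} (hb : LinearIndependent ℝ b) :
    Tendsto (fun m : ι → ℤ => ∑ i, (m i : ℝ) • b i) cofinite (cocompact E) := by
  have hcast : Tendsto (fun (m : ι → ℤ) i => (m i : ℝ)) cofinite (cocompact (ι → ℝ)) := by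
    simpa only [coprodᵢ_cofinite, coprodᵢ_cocompact] using
      Tendsto.pi_map_coprodᵢ fun _ : ι => Int.tendsto_coe_cofinite
  exact (LinearMap.isClosedEmbedding_of_injective
    (LinearMap.ker_eq_bot.2 hb.fintypeLinearCombination_injective)).tendsto_cocompact.comp hcast

lemma eventually_forall_le_of_tendsto_cofinite_atTop {α : Type*} {g : α → ℝ}
    (hg : Tendsto g cofinite atTop) : ∀ᶠ δ in 𝓝[>] (0 : ℝ), ∀ a, 0 < g a → δ ≤ g a := by
  have hfin : {a | ¬ 1 ≤ g a}.Finite := hg.eventually_ge_atTop 1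
  have hsmall : ∀ᶠ δ in 𝓝[>] (0 : ℝ), ∀ a ∈ {a | ¬ 1 ≤ g a}, 0 < g a → δ ≤ g a := by
    refine (eventually_all_finite hfin).2 fun a _ => ?_
    rcases le_or_gt (g a) 0 with ha | ha
    · exact Eventually.of_forall fun _ h => absurd h ha.not_gt
    · filter_upwards [nhdsWithin_le_nhds (Iic_mem_nhds ha)] with δ hδ _ using hδ
  filter_upwards [hsmall, nhdsWithin_le_nhds (Iic_mem_nhds zero_lt_one)] with δ hδ hδ1 a ha
  by_cases h : 1 ≤ g a
  · exact le_trans hδ1 h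
  · exact hδ a h ha

/-- The lattice point `m₂ τ - m₁`. Up to the factor `π / Im τ` it is the eigenvalue of `∂_z̄` on the
character `y ↦ exp (2πi (m₁ y¹ + m₂ y²))`; the components of `m` are numbered from `0`. -/
def dbarFreq (τ : ℂ) (m : Fin 2 → ℤ) : ℂ := m 1 * τ - m 0

lemma dbarFreq_eq_sum (τ : ℂ) (m : Fin 2 → ℤ) :
    dbarFreq τ m = ∑ i, (m i : ℝ) • ![-1, τ] i := by
  simp only [dbarFreq, Fin.sum_univ_two, Matrix.cons_val_zero, Matrix.cons_val_one,
    Complex.real_smul, Complex.ofReal_intCast]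
  ring

variable {τ : ℂ}

lemma linearIndependent_neg_one_of_im_ne_zero (hτ : τ.im ≠ 0) :
    LinearIndependent ℝ ![(-1 : ℂ), τ] := by
  refine LinearIndependent.pair_iff.2 fun a b hab => ?_
  have hb : b = 0 := by simpa [hτ] using congrArg Complex.im hab
  have ha : a = 0 := by simpa [hb] using congrArg Complex.re hab
  exact ⟨ha, hb⟩

lemma dbarFreq_eq_zero_iff (hτ : τ.im ≠ 0) {m : Fin 2 → ℤ} : dbarFreq τ m = 0 ↔ m = 0 := by
  refine ⟨fun h => ?_, fun h => by simp [dbarFreq, h]⟩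
  have hcoeff := Fintype.linearIndependent_iff.1 (linearIndependent_neg_one_of_im_ne_zero hτ)
    (fun i => (m i : ℝ)) (by rw [← dbarFreq_eq_sum, h])
  exact funext fun i => by exact_mod_cast hcoeff i

lemma exists_dbarFreq_gap (hτ : τ.im ≠ 0) {κ : Type*} [Finite κ] (w : κ → ℂ) :
    ∃ δ : ℝ, 0 < δ ∧ ∀ k m, dbarFreq τ m - w k ≠ 0 → δ ≤ ‖dbarFreq τ m - w k‖ := by
  have hcocompact : Tendsto (dbarFreq τ) cofinite (cocompact ℂ) := by
    simpa only [← dbarFreq_eq_sum] using tendsto_sum_intCast_smul_cofinite_cocompact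
      (linearIndependent_neg_one_of_im_ne_zero hτ)
  have hnorm (k : κ) : Tendsto (fun m => ‖dbarFreq τ m - w k‖) cofinite atTop := by
    have hshift := (Homeomorph.subRight (w k)).isClosedEmbedding.tendsto_cocompact
    exact (tendsto_norm_cocompact_atTop.comp hshift).comp hcocompact
  have hgap := eventually_all.2 fun k => eventually_forall_le_of_tendsto_cofinite_atTop (hnorm k)
  obtain ⟨δ, hδ, hpos⟩ := (hgap.and self_mem_nhdsWithin).exists
  exact ⟨δ, hpos, fun k m hne => hδ k m (norm_pos_iff.2 hne)⟩

end LatticeGap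

/-- The fundamental domain `[0, 1]²` of the torus in the real coordinates `(y¹, y²)`. -/
abbrev unitSquare : Set (ℝ × ℝ) := Set.Icc 0 1 ×ˢ Set.Icc 0 1

/-- The Fourier coefficient of `f` on the unit square at frequency `m`, with the characters
expressed through Mathlib's `fourier` on `ℝ / ℤ`. No periodicity of `f` is presupposed. -/
noncomputable def squareFourierCoeff (f : ℝ × ℝ → ℂ) (m : Fin 2 → ℤ) : ℂ :=
  ∫ y in unitSquare,
    fourier (-m 0) (y.1 : UnitAddCircle) * fourier (-m 1) (y.2 : UnitAddCircle) * f y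

section Parseval

-- `UnitAddTorus.hasSum_sq_mFourierCoeff` uses this normalisation, which is not a global instance.
noncomputable local instance : MeasureSpace UnitAddCircle := ⟨AddCircle.haarAddCircle⟩

/-- The point of `(0, 1]²` representing a point of the two-dimensional torus. -/
noncomputable def torusToSquare (x : UnitAddTorus (Fin 2)) : ℝ × ℝ :=
  ((AddCircle.equivIoc 1 0 (x 0) : ℝ), (AddCircle.equivIoc 1 0 (x 1) : ℝ))

lemma measurePreserving_torusToSquare :
    MeasurePreserving torusToSquare volume (volume.restrict unitSquare) := by
  have hsquare : unitSquare =ᵐ[volume] Set.Ioc (0 : ℝ) 1 ×ˢ Set.Ioc (0 : ℝ) 1 :=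
    Measure.set_prod_ae_eq Ioc_ae_eq_Icc.symm Ioc_ae_eq_Icc.symm
  have hbox : {x : Fin 2 → ℝ | ∀ i, x i ∈ Set.Ioc (0 : ℝ) (0 + 1)} =
      MeasurableEquiv.finTwoArrow ⁻¹' (Set.Ioc (0 : ℝ) 1 ×ˢ Set.Ioc (0 : ℝ) 1) := by
    ext x
    simp [Fin.forall_fin_two]
  have hval := measurePreserving_subtype_coe (μa := volume)
    (MeasurableSet.univ_pi' fun _ : Fin 2 => measurableSet_Ioc (a := (0 : ℝ)) (b := 0 + 1))
  have hmeas : MeasurableSet (Set.Ioc (0 : ℝ) 1 ×ˢ Set.Ioc (0 : ℝ) 1) :=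
    measurableSet_Ioc.prod measurableSet_Ioc
  have hpair := (volume_preserving_finTwoArrow ℝ).restrict_preimage hmeas
  rw [Measure.restrict_congr_set hsquare]
  rw [← hbox] at hpair
  exact hpair.comp (hval.comp (UnitAddTorus.measurePreserving_equivPiIoc fun _ => 0))

lemma mFourier_neg_eq_torusToSquare (m : Fin 2 → ℤ) (x : UnitAddTorus (Fin 2)) :
    UnitAddTorus.mFourier (-m) x = fourier (-m 0) ((torusToSquare x).1 : UnitAddCircle) *
      fourier (-m 1) ((torusToSquare x).2 : UnitAddCircle) := by
  have hcoe (a : UnitAddCircle) : ((AddCircle.equivIoc 1 0 a : ℝ) : UnitAddCircle) = a :=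
    (AddCircle.equivIoc 1 0).symm_apply_apply a
  simp only [UnitAddTorus.mFourier, ContinuousMap.coe_mk, Fin.prod_univ_two, Pi.neg_apply,
    torusToSquare, hcoe]

lemma hasSum_sq_squareFourierCoeff {f : ℝ × ℝ → ℂ} (hf : MemLp f 2 (volume.restrict unitSquare)) :
    HasSum (fun m => ‖squareFourierCoeff f m‖ ^ 2) (∫ y in unitSquare, ‖f y‖ ^ 2) := by
  have hmp := measurePreserving_torusToSquare
  have hg := hf.comp_measurePreserving hmp
  have hcoeff (m : Fin 2 → ℤ) :
      squareFourierCoeff f m = UnitAddTorus.mFourierCoeff (hg.toLp _) m := by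
    have hmeas : AEStronglyMeasurable (fun y : ℝ × ℝ => fourier (-m 0) (y.1 : UnitAddCircle) *
        fourier (-m 1) (y.2 : UnitAddCircle) * f y) (volume.restrict unitSquare) :=
      (by fun_prop : Continuous fun y : ℝ × ℝ => fourier (-m 0) (y.1 : UnitAddCircle) *
        fourier (-m 1) (y.2 : UnitAddCircle)).aestronglyMeasurable.mul hf.1
    rw [squareFourierCoeff, ← hmp.map_eq, integral_map hmp.aemeasurable (hmp.map_eq ▸ hmeas)]
    refine integral_congr_ae ?_
    filter_upwards [hg.coeFn_toLp] with x hx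
    rw [hx, mFourier_neg_eq_torusToSquare, Function.comp_apply, smul_eq_mul]
  have hnorm : ∫ y in unitSquare, ‖f y‖ ^ 2 = ∫ x, ‖hg.toLp _ x‖ ^ 2 := by
    rw [← hmp.map_eq, integral_map hmp.aemeasurable (hmp.map_eq ▸ (hf.1.norm.pow 2))]
    refine integral_congr_ae ?_
    filter_upwards [hg.coeFn_toLp] with x hx
    rw [hx, Function.comp_apply]
  simpa only [hcoeff, hnorm] using UnitAddTorus.hasSum_sq_mFourierCoeff (hg.toLp _)

end Parseval

section UnitSquare

variable {f : ℝ × ℝ → ℂ}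

lemma integrableOn_unitSquare_of_continuous {E : Type*} [NormedAddCommGroup E] {g : ℝ × ℝ → E}
    (hg : Continuous g) : IntegrableOn g unitSquare :=
  hg.continuousOn.integrableOn_compact (isCompact_Icc.prod isCompact_Icc)

lemma memLp_two_unitSquare_of_continuous (hf : Continuous f) :
    MemLp f 2 (volume.restrict unitSquare) :=
  (memLp_two_iff_integrable_sq_norm hf.aestronglyMeasurable).2
    (integrableOn_unitSquare_of_continuous (hf.norm.pow 2))

lemma integrableOn_fourier_mul (hf : Continuous f) (m : Fin 2 → ℤ) :
    IntegrableOn (fun y : ℝ × ℝ => fourier (-m 0) (y.1 : UnitAddCircle) *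
      fourier (-m 1) (y.2 : UnitAddCircle) * f y) unitSquare :=
  integrableOn_unitSquare_of_continuous (by fun_prop)

lemma squareFourierCoeff_zero (f : ℝ × ℝ → ℂ) :
    squareFourierCoeff f 0 = ∫ y in unitSquare, f y := by
  simp only [squareFourierCoeff, Pi.zero_apply, neg_zero, fourier_zero, one_mul]

lemma squareFourierCoeff_smul (c : ℂ) (f : ℝ × ℝ → ℂ) (m : Fin 2 → ℤ) :
    squareFourierCoeff (c • f) m = c * squareFourierCoeff f m := by
  simp only [squareFourierCoeff, Pi.smul_apply, smul_eq_mul, mul_left_comm _ c, integral_const_mul]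

lemma squareFourierCoeff_add {g : ℝ × ℝ → ℂ} (hf : Continuous f) (hg : Continuous g)
    (m : Fin 2 → ℤ) :
    squareFourierCoeff (f + g) m = squareFourierCoeff f m + squareFourierCoeff g m := by
  simp only [squareFourierCoeff, Pi.add_apply, mul_add]
  exact integral_add (integrableOn_fourier_mul hf m) (integrableOn_fourier_mul hg m)

lemma squareFourierCoeff_eq_integral_snd_fst (hf : Continuous f) (m : Fin 2 → ℤ) :
    squareFourierCoeff f m = ∫ t in Set.Icc (0 : ℝ) 1, fourier (-m 1) (t : UnitAddCircle) *
      ∫ x in (0 : ℝ)..1, fourier (-m 0) (x : UnitAddCircle) * f (x, t) := by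
  have hint := (integrableOn_fourier_mul hf m).swap
  rw [squareFourierCoeff, Measure.volume_eq_prod, ← setIntegral_prod_swap]
  refine (setIntegral_prod _ hint).trans ?_
  simp only [intervalIntegral.integral_of_le zero_le_one, ← integral_Icc_eq_integral_Ioc,
    ← integral_const_mul, Function.comp_apply, Prod.swap_prod_mk, mul_assoc, mul_left_comm]

lemma squareFourierCoeff_eq_integral_fst_snd (hf : Continuous f) (m : Fin 2 → ℤ) :
    squareFourierCoeff f m = ∫ x in Set.Icc (0 : ℝ) 1, fourier (-m 0) (x : UnitAddCircle) *
      ∫ t in (0 : ℝ)..1, fourier (-m 1) (t : UnitAddCircle) * f (x, t) := by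
  rw [squareFourierCoeff, Measure.volume_eq_prod,
    setIntegral_prod _ (integrableOn_fourier_mul hf m)]
  simp only [intervalIntegral.integral_of_le zero_le_one, ← integral_Icc_eq_integral_Ioc,
    ← integral_const_mul, mul_assoc]

end UnitSquare

section Derivatives

lemma integral_fourier_neg_mul_deriv {f f' : ℝ → ℂ} (hf : ∀ t, HasDerivAt f (f' t) t)
    (hf' : Continuous f') (hper : f 1 = f 0) (n : ℤ) :
    ∫ t in (0 : ℝ)..1, fourier (-n) (t : UnitAddCircle) * f' t =
      2 * Real.pi * Complex.I * n * ∫ t in (0 : ℝ)..1, fourier (-n) (t : UnitAddCircle) * f t := by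
  have hchar : Continuous fun t : ℝ => fourier (-n) (t : UnitAddCircle) := by fun_prop
  have hends : ((1 : ℝ) : UnitAddCircle) = ((0 : ℝ) : UnitAddCircle) := by simp
  rw [intervalIntegral.integral_mul_deriv_eq_deriv_mul
    (fun t _ => hasDerivAt_fourier_neg 1 n t) (fun t _ => hf t)
    ((continuous_const.mul hchar).intervalIntegrable _ _) (hf'.intervalIntegrable _ _),
    hends, hper, sub_self, zero_sub, ← intervalIntegral.integral_neg,
    ← intervalIntegral.integral_const_mul]
  congr! 2
  push_cast
  ring

variable {f : ℝ × ℝ → ℂ}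

lemma pdy1_eq_fderiv {y : ℝ × ℝ} (hf : DifferentiableAt ℝ f y) :
    pdy1 f y = fderiv ℝ f y (1, 0) :=
  (HasFDerivAt.comp_hasDerivAt y.1 (f := fun t => (t, y.2)) hf.hasFDerivAt
    ((hasDerivAt_id _).prodMk (hasDerivAt_const _ _))).deriv

lemma pdy2_eq_fderiv {y : ℝ × ℝ} (hf : DifferentiableAt ℝ f y) :
    pdy2 f y = fderiv ℝ f y (0, 1) :=
  (HasFDerivAt.comp_hasDerivAt y.2 (f := fun t => (y.1, t)) hf.hasFDerivAt
    ((hasDerivAt_const _ _).prodMk (hasDerivAt_id _))).deriv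

lemma continuous_pdy1 (hf : ContDiff ℝ 1 f) : Continuous (pdy1 f) := by
  have hpdy : pdy1 f = fun y => fderiv ℝ f y (1, 0) :=
    funext fun y => pdy1_eq_fderiv (hf.differentiable one_ne_zero y)
  rw [hpdy]
  exact (hf.continuous_fderiv one_ne_zero).clm_apply continuous_const

lemma continuous_pdy2 (hf : ContDiff ℝ 1 f) : Continuous (pdy2 f) := by
  have hpdy : pdy2 f = fun y => fderiv ℝ f y (0, 1) :=
    funext fun y => pdy2_eq_fderiv (hf.differentiable one_ne_zero y)
  rw [hpdy]
  exact (hf.continuous_fderiv one_ne_zero).clm_apply continuous_const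

lemma squareFourierCoeff_pdy1 (hf : ContDiff ℝ 1 f) (hper : ∀ t, f (1, t) = f (0, t))
    (m : Fin 2 → ℤ) :
    squareFourierCoeff (pdy1 f) m = 2 * Real.pi * Complex.I * m 0 * squareFourierCoeff f m := by
  have hslice (t x : ℝ) : HasDerivAt (fun x => f (x, t)) (pdy1 f (x, t)) x :=
    ((hf.differentiable one_ne_zero).comp (by fun_prop) x).hasDerivAt
  have hslice' (t : ℝ) : Continuous fun x => pdy1 f (x, t) :=
    (continuous_pdy1 hf).comp (Continuous.prodMk_left t)
  simp only [squareFourierCoeff_eq_integral_snd_fst (continuous_pdy1 hf),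
    squareFourierCoeff_eq_integral_snd_fst hf.continuous,
    integral_fourier_neg_mul_deriv (hslice _) (hslice' _) (hper _), mul_left_comm (fourier _ _),
    integral_const_mul]

lemma squareFourierCoeff_pdy2 (hf : ContDiff ℝ 1 f) (hper : ∀ x, f (x, 1) = f (x, 0))
    (m : Fin 2 → ℤ) :
    squareFourierCoeff (pdy2 f) m = 2 * Real.pi * Complex.I * m 1 * squareFourierCoeff f m := by
  have hslice (x t : ℝ) : HasDerivAt (fun t => f (x, t)) (pdy2 f (x, t)) t :=
    ((hf.differentiable one_ne_zero).comp (by fun_prop) t).hasDerivAt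
  have hslice' (x : ℝ) : Continuous fun t => pdy2 f (x, t) :=
    (continuous_pdy2 hf).comp (Continuous.prodMk_right x)
  simp only [squareFourierCoeff_eq_integral_fst_snd (continuous_pdy2 hf),
    squareFourierCoeff_eq_integral_fst_snd hf.continuous,
    integral_fourier_neg_mul_deriv (hslice _) (hslice' _) (hper _), mul_left_comm (fourier _ _),
    integral_const_mul]

end Derivatives

section TwistedDbar

/-- The operator `∂_z̄ - (π / Im τ) w`. For `w = q̃_k - q̃_l` this is `∂̄_{A₀}` on the `(k, l)`
entry of an endomorphism, that is, on sections of `Hom(L_{q_l}, L_{q_k})`. -/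
noncomputable def twistedDbar (τ w : ℂ) (f : ℝ × ℝ → ℂ) (y : ℝ × ℝ) : ℂ :=
  dbar τ f y - (Real.pi : ℂ) / (τ.im : ℂ) * w * f y

variable {τ w : ℂ} {f : ℝ × ℝ → ℂ}

lemma twistedDbar_eq_linearCombination (τ w : ℂ) (f : ℝ × ℝ → ℂ) :
    twistedDbar τ w f = (-(1 / (2 * Complex.I * (τ.im : ℂ)))) • pdy1 f +
      (τ / (2 * Complex.I * (τ.im : ℂ))) • pdy2 f + (-((Real.pi : ℂ) / (τ.im : ℂ) * w)) • f := by
  funext y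
  simp only [twistedDbar, dbar, Pi.add_apply, Pi.smul_apply, smul_eq_mul]
  ring

lemma continuous_twistedDbar (τ w : ℂ) (hf : ContDiff ℝ 1 f) : Continuous (twistedDbar τ w f) := by
  have h₁ := continuous_pdy1 hf
  have h₂ := continuous_pdy2 hf
  have h₀ := hf.continuous
  rw [twistedDbar_eq_linearCombination]
  fun_prop

lemma squareFourierCoeff_twistedDbar (τ w : ℂ) (hf : ContDiff ℝ 1 f)
    (hper₁ : ∀ t, f (1, t) = f (0, t)) (hper₂ : ∀ x, f (x, 1) = f (x, 0)) (m : Fin 2 → ℤ) :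
    squareFourierCoeff (twistedDbar τ w f) m =
      (Real.pi : ℂ) / (τ.im : ℂ) * (dbarFreq τ m - w) * squareFourierCoeff f m := by
  have h₁ := continuous_pdy1 hf
  have h₂ := continuous_pdy2 hf
  have h₀ := hf.continuous
  rw [twistedDbar_eq_linearCombination, squareFourierCoeff_add (by fun_prop) (by fun_prop),
    squareFourierCoeff_add (by fun_prop) (by fun_prop), squareFourierCoeff_smul,
    squareFourierCoeff_smul, squareFourierCoeff_smul, squareFourierCoeff_pdy1 hf hper₁,
    squareFourierCoeff_pdy2 hf hper₂, dbarFreq]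
  field_simp
  ring

lemma sq_mul_integral_le_integral_twistedDbar {δ : ℝ} (hδ : 0 ≤ δ) (hf : ContDiff ℝ 1 f)
    (hper₁ : ∀ t, f (1, t) = f (0, t)) (hper₂ : ∀ x, f (x, 1) = f (x, 0))
    (hgap : ∀ m, squareFourierCoeff f m ≠ 0 → δ ≤ ‖dbarFreq τ m - w‖) :
    (Real.pi / |τ.im| * δ) ^ 2 * ∫ y in unitSquare, ‖f y‖ ^ 2 ≤
      ∫ y in unitSquare, ‖twistedDbar τ w f y‖ ^ 2 := by
  have hf₂ := memLp_two_unitSquare_of_continuous hf.continuous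
  have hDf₂ := memLp_two_unitSquare_of_continuous (continuous_twistedDbar τ w hf)
  refine hasSum_le (fun m => ?_) ((hasSum_sq_squareFourierCoeff hf₂).mul_left _)
    (hasSum_sq_squareFourierCoeff hDf₂)
  have hnorm : ‖(Real.pi : ℂ) / (τ.im : ℂ)‖ = Real.pi / |τ.im| := by
    simp [abs_of_pos Real.pi_pos]
  rw [squareFourierCoeff_twistedDbar τ w hf hper₁ hper₂, norm_mul, norm_mul, hnorm, ← mul_pow]
  rcases eq_or_ne (squareFourierCoeff f m) 0 with h0 | h0
  · simp [h0]
  · have hle := hgap m h0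
    gcongr

end TwistedDbar

section Matrix

variable {n : ℕ} {s : ℝ × ℝ → Matrix (Fin n) (Fin n) ℂ}

lemma l2sq_eq_sum_integral_norm_sq (hs : ∀ k l, Continuous fun y => s y k l) :
    l2sq n s = ∑ k, ∑ l, ∫ y in unitSquare, ‖s y k l‖ ^ 2 := by
  have hint (k l : Fin n) : IntegrableOn (fun y => ‖s y k l‖ ^ 2) unitSquare :=
    integrableOn_unitSquare_of_continuous ((hs k l).norm.pow 2)
  simp only [l2sq, Complex.normSq_eq_norm_sq]
  rw [integral_finsetSum _ fun k _ => integrable_finsetSum _ fun l _ => hint k l]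
  exact Finset.sum_congr rfl fun k _ => integral_finsetSum _ fun l _ => hint k l

lemma sq_mul_l2sq_le_l2sq_dbarA {τ : ℂ} {Q : Fin n → ℂ} {δ : ℝ} (hδ : 0 ≤ δ)
    (hs : ∀ k l, ContDiff ℝ 1 fun y => s y k l)
    (hper₁ : ∀ t, s (1, t) = s (0, t)) (hper₂ : ∀ x, s (x, 1) = s (x, 0))
    (hgap : ∀ k l m, squareFourierCoeff (fun y => s y k l) m ≠ 0 →
      δ ≤ ‖dbarFreq τ m - (Q k - Q l)‖) :
    (Real.pi / |τ.im| * δ) ^ 2 * l2sq n s ≤ l2sq n (dbarA n τ Q s) := by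
  rw [l2sq_eq_sum_integral_norm_sq fun k l => (hs k l).continuous,
    l2sq_eq_sum_integral_norm_sq (s := dbarA n τ Q s) fun k l =>
      continuous_twistedDbar τ (Q k - Q l) (hs k l)]
  simp only [Finset.mul_sum]
  exact Finset.sum_le_sum fun k _ => Finset.sum_le_sum fun l _ =>
    sq_mul_integral_le_integral_twistedDbar hδ (hs k l) (fun t => by rw [hper₁])
      (fun x => by rw [hper₂]) (hgap k l)

lemma dbarFreq_sub_ne_zero_of_squareFourierCoeff_ne_zero {τ : ℂ} (hτ : τ.im ≠ 0) {Q : Fin n → ℂ}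
    (hdist : ∀ k l, k ≠ l → ∀ m m' : ℤ, Q k - Q l ≠ (m : ℂ) + (m' : ℂ) * τ)
    (hmean : ∀ k, ∫ y in unitSquare, s y k k = 0) {k l : Fin n} {m : Fin 2 → ℤ}
    (hm : squareFourierCoeff (fun y => s y k l) m ≠ 0) : dbarFreq τ m - (Q k - Q l) ≠ 0 := by
  rcases eq_or_ne k l with rfl | hkl
  · rw [sub_self, sub_zero, ne_eq, dbarFreq_eq_zero_iff hτ]
    rintro rfl
    exact hm ((squareFourierCoeff_zero _).trans (hmean k))
  · refine fun h => hdist k l hkl (-m 0) (m 1) ?_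
    rw [← sub_eq_zero.1 h, dbarFreq]
    push_cast
    ring

end Matrix

theorem stmt14_general (n : ℕ) (τ : ℂ) (hτ : τ.im ≠ 0) (Q : Fin n → ℂ)
    (hdist : ∀ k l, k ≠ l → ∀ m m' : ℤ, Q k - Q l ≠ (m : ℂ) + (m' : ℂ) * τ) :
    ∃ Cp : ℝ, 0 < Cp ∧
      ∀ s : ℝ × ℝ → Matrix (Fin n) (Fin n) ℂ,
        (∀ k l, ContDiff ℝ 1 (fun y => s y k l)) →
        (∀ y : ℝ × ℝ, s (y.1 + 1, y.2) = s y) →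
        (∀ y : ℝ × ℝ, s (y.1, y.2 + 1) = s y) →
        (∀ k, (∫ y in unitSquare, s y k k) = 0) →
        Real.sqrt (l2sq n s) ≤ Cp * Real.sqrt (l2sq n (dbarA n τ Q s)) := by
  obtain ⟨δ, hδ, hgap⟩ := exists_dbarFreq_gap hτ fun p : Fin n × Fin n => Q p.1 - Q p.2
  have hc : 0 < Real.pi / |τ.im| * δ := by positivity
  refine ⟨(Real.pi / |τ.im| * δ)⁻¹, inv_pos.2 hc, fun s hs hper₁ hper₂ hmean => ?_⟩
  have hsq := sq_mul_l2sq_le_l2sq_dbarA hδ.le hs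
    (fun t => by simpa only [zero_add] using hper₁ (0, t))
    (fun x => by simpa only [zero_add] using hper₂ (x, 0)) fun k l m hm =>
      hgap (k, l) m (dbarFreq_sub_ne_zero_of_squareFourierCoeff_ne_zero hτ hdist hmean hm)
  rw [le_inv_mul_iff₀ hc]
  calc Real.pi / |τ.im| * δ * √(l2sq n s) = √((Real.pi / |τ.im| * δ) ^ 2 * l2sq n s) := by
        rw [Real.sqrt_mul (sq_nonneg _), Real.sqrt_sq hc.le]
    _ ≤ √(l2sq n (dbarA n τ Q s)) := Real.sqrt_le_sqrt hsq

/-- Poincaré inequality.  Let `E = ℂ/(ℤ + τℤ)` (flat metric `g₀`,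
`Im τ > 0`) and `E₀ = L_{q₁} ⊕ ⋯ ⊕ L_{q_n}` with the points `q_i` pairwise
distinct in `E` (their lifts `Q k` differ by no lattice point), equipped with the
flat diagonal Chern connection `A₀` and the trivial Hermitian metric `H₀`.  Then
there is `C_p > 0` such that for every trace-free Hermitian endomorphism `s`
(smooth and doubly periodic) whose diagonal entries have zero average over `E`,
`‖s‖_{L²(E)} ≤ C_p ‖∂̄_{A₀} s‖_{L²(E)}`. -/
theorem stmt14 (n : ℕ) (τ : ℂ) (hτ : 0 < τ.im) (Q : Fin n → ℂ)
    (hdist : ∀ k l, k ≠ l → ∀ m m' : ℤ, Q k - Q l ≠ (m : ℂ) + (m' : ℂ) * τ) :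
    ∃ Cp : ℝ, 0 < Cp ∧
      ∀ s : ℝ × ℝ → Matrix (Fin n) (Fin n) ℂ,
        (∀ k l, ContDiff ℝ (⊤ : ℕ∞) (fun y => s y k l)) →
        (∀ y : ℝ × ℝ, s (y.1 + 1, y.2) = s y) →
        (∀ y : ℝ × ℝ, s (y.1, y.2 + 1) = s y) →
        (∀ y, (s y)ᴴ = s y) →
        (∀ y, Matrix.trace (s y) = 0) →
        (∀ k, (∫ y in (Set.Icc (0:ℝ) 1 ×ˢ Set.Icc (0:ℝ) 1), s y k k) = 0) →
        Real.sqrt (l2sq n s) ≤ Cp * Real.sqrt (l2sq n (dbarA n τ Q s)) := by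
  obtain ⟨Cp, hCp, hle⟩ := stmt14_general n τ hτ.ne' Q hdist
  exact ⟨Cp, hCp, fun s hs hper₁ hper₂ _ _ =>
    hle s (fun k l => (hs k l).of_le (by exact_mod_cast le_top)) hper₁ hper₂⟩
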